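/- arXiv:2511.05994 — 6 statements merged into one kernel-verified Lean document; each statement's English description precedes it below -/
import Mathlib

section
/- Let Λ be a real number and let F : ℝ → ℝ be differentiable on (-∞, 0). Then F satisfies T·F'(T) − F(T)/2 = Λ for all T < 0 if and only if there exists a real constant α such that F(T) = −2Λ + α·√(−T) for all T < 0. -/
/-!
If `φ` is a nowhere vanishing function with `φ f' = φ' f`, then `(φ⁻¹ f)' = 0`, so `f` is a
constant multiple of `φ`. For the Euler equation `T f' = p f` on the negative half-line one takes
`φ T = (-T) ^ p`; the inhomogeneous equation `T F' - p F = Λ` is the homogeneous one for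
`F + Λ / p`. The reconstruction of ΛCDM is the case `p = 1 / 2`.
-/

open Set

section ConstantMultiple

variable {𝕜 E : Type*} [RCLike 𝕜] [NormedAddCommGroup E] [NormedSpace 𝕜 E]

theorem deriv_inv_smul_eq_zero {φ : 𝕜 → 𝕜} {f : 𝕜 → E} {x : 𝕜} (hφ : DifferentiableAt 𝕜 φ x)
    (hf : DifferentiableAt 𝕜 f x) (hx : φ x ≠ 0) (h : φ x • deriv f x = deriv φ x • f x) :
    deriv (fun y => (φ y)⁻¹ • f y) x = 0 := by
  have quotient_rule := (hφ.hasDerivAt.fun_inv hx).fun_smul hf.hasDerivAt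
  have deriv_f : deriv f x = (φ x)⁻¹ • deriv φ x • f x := by rw [← h, inv_smul_smul₀ hx]
  rw [quotient_rule.deriv, deriv_f, smul_smul, smul_smul, ← add_smul]
  convert zero_smul 𝕜 (f x)
  field_simp
  ring

theorem smul_deriv_eq_deriv_smul_iff_exists_eq_smul_const {s : Set 𝕜} {φ : 𝕜 → 𝕜} {f : 𝕜 → E}
    (hs : IsOpen s) (hs' : IsPreconnected s) (hφ : DifferentiableOn 𝕜 φ s)
    (hf : DifferentiableOn 𝕜 f s) (hφ₀ : ∀ x ∈ s, φ x ≠ 0) :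
    (∀ x ∈ s, φ x • deriv f x = deriv φ x • f x) ↔ ∃ c : E, ∀ x ∈ s, f x = φ x • c := by
  constructor
  · intro h
    obtain ⟨c, hc⟩ : ∃ c, ∀ x ∈ s, (φ x)⁻¹ • f x = c :=
      hs.exists_is_const_of_deriv_eq_zero hs' ((hφ.inv hφ₀).smul hf) fun x hx =>
        deriv_inv_smul_eq_zero (hφ.differentiableAt (hs.mem_nhds hx))
          (hf.differentiableAt (hs.mem_nhds hx)) (hφ₀ x hx) (h x hx)
    exact ⟨c, fun x hx => (inv_smul_eq_iff₀ (hφ₀ x hx)).mp (hc x hx)⟩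
  · rintro ⟨c, hc⟩ x hx
    have deriv_f : deriv f x = deriv φ x • c :=
      (EqOn.deriv hc hs hx).trans (deriv_smul_const (hφ.differentiableAt (hs.mem_nhds hx)) c)
    rw [deriv_f, hc x hx, smul_comm]

end ConstantMultiple

theorem hasDerivAt_neg_rpow_const {T : ℝ} (hT : T < 0) (p : ℝ) :
    HasDerivAt (fun x : ℝ => (-x) ^ p) (p * (-T) ^ p / T) T := by
  refine ((hasDerivAt_neg T).rpow_const (Or.inl (neg_ne_zero.mpr hT.ne))).congr_deriv ?_
  rw [Real.rpow_sub_one (neg_ne_zero.mpr hT.ne)]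
  field_simp

section EulerEquation

variable {E : Type*} [NormedAddCommGroup E] [NormedSpace ℝ E]

theorem smul_deriv_eq_smul_iff_exists_eq_neg_rpow_smul (p : ℝ) {f : ℝ → E}
    (hf : DifferentiableOn ℝ f (Iio 0)) :
    (∀ T < 0, T • deriv f T = p • f T) ↔ ∃ α : E, ∀ T < 0, f T = (-T) ^ p • α := by
  have rpow_ne_zero : ∀ T ∈ Iio (0 : ℝ), (-T) ^ p ≠ 0 := fun T hT =>
    (Real.rpow_pos_of_pos (neg_pos.mpr hT) p).ne'
  refine Iff.trans (forall₂_congr fun T hT => ?_)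
    (smul_deriv_eq_deriv_smul_iff_exists_eq_smul_const isOpen_Iio isPreconnected_Iio
      (fun T hT => (hasDerivAt_neg_rpow_const hT p).differentiableAt.differentiableWithinAt)
      hf rpow_ne_zero)
  have deriv_smul : deriv (fun x : ℝ => (-x) ^ p) T • f T = (-T) ^ p • T⁻¹ • p • f T := by
    rw [(hasDerivAt_neg_rpow_const hT p).deriv]
    module
  rw [deriv_smul, smul_right_inj (rpow_ne_zero T hT), eq_inv_smul_iff₀ hT.ne]

theorem stmt_0_general {p : ℝ} (hp : p ≠ 0) (Λ : E) {F : ℝ → E}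
    (hF : DifferentiableOn ℝ F (Iio 0)) :
    (∀ T < 0, T • deriv F T - p • F T = Λ) ↔
      ∃ α : E, ∀ T < 0, F T = -(p⁻¹ • Λ) + (-T) ^ p • α := by
  have homogeneous :=
    smul_deriv_eq_smul_iff_exists_eq_neg_rpow_smul p (hF.add_const (p⁻¹ • Λ))
  simpa only [deriv_add_const, smul_add, smul_inv_smul₀ hp, sub_eq_iff_eq_add',
    eq_neg_add_iff_add_eq, add_comm (p⁻¹ • Λ)] using homogeneous

end EulerEquation

/-- ΛCDM reconstruction in f(𝕋) gravity: F satisfies T·F'(T) − F(T)/2 = Λ on (-∞,0)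
iff F(T) = −2Λ + α√(−T) there. -/
theorem stmt_0 (Λ : ℝ) (F : ℝ → ℝ) (hF : DifferentiableOn ℝ F (Set.Iio 0)) :
    (∀ T < 0, T * deriv F T - F T / 2 = Λ) ↔
      ∃ α : ℝ, ∀ T < 0, F T = -2 * Λ + α * Real.sqrt (-T) := by
  simpa only [smul_eq_mul, inv_inv, div_eq_mul_inv, one_mul, mul_neg, Real.sqrt_eq_rpow,
    mul_comm] using stmt_0_general (inv_ne_zero two_ne_zero) Λ hF
end

section
/- Let g, h : ℝ → ℝ be differentiable on (-∞, 0) and let H : ℝ → ℝ be differentiable with H(t) ≠ 0 for all t, and suppose H' exists. Define 𝕋(t) = −6·H(t)² and B(t) = −6·(H'(t) + 3·H(t)²), and define F_𝕋(t) = g'(𝕋(t)) + B(t)·h'(𝕋(t)), F(t) = g(𝕋(t)) + B(t)·h(𝕋(t)), F_B(t) = h(𝕋(t)). Then for every t, the dark-energy density ρ_DE(t) := 𝕋(t)·F_𝕋(t) − F(t)/2 + (1/2)·F_B(t)·B(t) + 3·H(t)·(d/dt)[h(𝕋(t))] equals 𝕋(t)·g'(𝕋(t)) − g(𝕋(t))/2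 + 3·𝕋(t)²·h'(𝕋(t)). -/
/-!
Differentiating `𝕋 = -6H²` gives `3H·𝕋' = -36H²H' = 6𝕋H'`, while `B = -6H' + 3𝕋`, so that
`3H·𝕋' = 3𝕋² - 𝕋B`. By the chain rule the term `3H·(d/dt)F_B` with `F_B = h(𝕋)` is therefore
`(3𝕋² - 𝕋B)·h'(𝕋)`: its second part cancels the `B`-dependence of `𝕋·F_𝕋`, and
`-B·h(𝕋)/2` in `-F/2` cancels against `F_B·B/2`.
-/

/-- The torsion scalar `𝕋 = -6H²` of a spatially flat FLRW background with Hubble function `H`. -/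
noncomputable def torsionScalar (H : ℝ → ℝ) (t : ℝ) : ℝ :=
  -6 * H t ^ 2

/-- The boundary term `B = -6(H' + 3H²)` of the same background, the second argument of
`f(𝕋, B)`. -/
noncomputable def boundaryTerm (H : ℝ → ℝ) (t : ℝ) : ℝ :=
  -6 * (deriv H t + 3 * H t ^ 2)

section

variable {h H : ℝ → ℝ} {t : ℝ}

theorem torsionScalar_neg (hHt : H t ≠ 0) : torsionScalar H t < 0 :=
  mul_neg_of_neg_of_pos (by norm_num) (sq_pos_of_ne_zero hHt)

theorem hasDerivAt_torsionScalar {H' : ℝ} (hH : HasDerivAt H H' t) :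
    HasDerivAt (torsionScalar H) (-12 * H t * H') t := by
  refine ((hH.pow 2).const_mul (-6)).congr_deriv ?_
  push_cast
  ring

theorem three_mul_mul_deriv_torsionScalar (hH : DifferentiableAt ℝ H t) :
    3 * H t * deriv (torsionScalar H) t =
      3 * torsionScalar H t ^ 2 - torsionScalar H t * boundaryTerm H t := by
  rw [(hasDerivAt_torsionScalar hH.hasDerivAt).deriv, torsionScalar, boundaryTerm]
  ring

theorem three_mul_mul_deriv_comp_torsionScalar
    (hh : DifferentiableAt ℝ h (torsionScalar H t)) (hH : DifferentiableAt ℝ H t) :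
    3 * H t * deriv (fun s => h (torsionScalar H s)) t =
      (3 * torsionScalar H t ^ 2 - torsionScalar H t * boundaryTerm H t) *
        deriv h (torsionScalar H t) := by
  have hT : DifferentiableAt ℝ (torsionScalar H) t :=
    (hasDerivAt_torsionScalar hH.hasDerivAt).differentiableAt
  have chain_rule : deriv (fun s => h (torsionScalar H s)) t =
      deriv h (torsionScalar H t) * deriv (torsionScalar H) t :=
    deriv_comp t hh hT
  rw [chain_rule, ← three_mul_mul_deriv_torsionScalar hH]
  ring

theorem stmt_1_general (g : ℝ → ℝ)
    (hh : DifferentiableAt ℝ h (torsionScalar H t)) (hH : DifferentiableAt ℝ H t) :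
    torsionScalar H t *
          (deriv g (torsionScalar H t) + boundaryTerm H t * deriv h (torsionScalar H t))
        - (g (torsionScalar H t) + boundaryTerm H t * h (torsionScalar H t)) / 2
        + (1 / 2) * h (torsionScalar H t) * boundaryTerm H t
        + 3 * H t * deriv (fun s => h (torsionScalar H s)) t
      = torsionScalar H t * deriv g (torsionScalar H t) - g (torsionScalar H t) / 2
        + 3 * torsionScalar H t ^ 2 * deriv h (torsionScalar H t) := by
  rw [three_mul_mul_deriv_comp_torsionScalar hh hH]
  ring

end

/-- In f(𝕋,B) gravity with the ansatz F(𝕋,B) = g(𝕋) + B·h(𝕋), the dark-energy density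
ρ_DE = 𝕋F_𝕋 − F/2 + (1/2)F_B·B + 3H·(d/dt)F_B reduces to 𝕋g'(𝕋) − g(𝕋)/2 + 3𝕋²h'(𝕋). -/
theorem stmt_1 (g h H : ℝ → ℝ)
    (hg : DifferentiableOn ℝ g (Set.Iio 0))
    (hh : DifferentiableOn ℝ h (Set.Iio 0))
    (hH : Differentiable ℝ H)
    (hHne : ∀ t, H t ≠ 0)
    (T B : ℝ → ℝ)
    (hT : ∀ t, T t = -6 * H t ^ 2)
    (hB : ∀ t, B t = -6 * (deriv H t + 3 * H t ^ 2)) :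
    ∀ t, T t * (deriv g (T t) + B t * deriv h (T t))
        - (g (T t) + B t * h (T t)) / 2
        + (1 / 2) * h (T t) * B t
        + 3 * H t * deriv (fun s => h (T s)) t
      = T t * deriv g (T t) - g (T t) / 2 + 3 * (T t) ^ 2 * deriv h (T t) := by
  intro t
  obtain rfl : T = torsionScalar H := funext hT
  obtain rfl : B = boundaryTerm H := funext hB
  exact stmt_1_general g (hh.differentiableAt (Iio_mem_nhds (torsionScalar_neg (hHne t)))) (hH t)
end

section
/- Let Λ > 0 and α be real numbers. Define g(T) = (α−1)·T and h(T) = −(1/3)·(Λ/T + ((α−1)/2)·log(−T/Λ)) for T < 0. Then for every T < 0, T·g'(T) − g(T)/2 + 3·T²·h'(T) = Λ. -/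
/-!
For `g(T) = βT` the terms in `g` contribute `βT/2`, so the reconstruction equation is the
first-order equation `h'(T) = Λ/(3T²) - β/(6T)`. Integrating gives
`h(T) = -(1/3)(Λ/T + (β/2) log(-T/s))`, where the scale `s` is a constant of integration: rescaling
it only adds a constant to `h`. The family in question has `β = α - 1` and `s = Λ`.
-/

theorem hasDerivAt_log_const_mul {c x : ℝ} (hc : c ≠ 0) (hx : x ≠ 0) :
    HasDerivAt (fun y => Real.log (c * y)) x⁻¹ x := by
  have h := (hasDerivAt_const_mul c).log (mul_ne_zero hc hx)
  rwa [div_mul_cancel_left₀ hc] at h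

theorem hasDerivAt_const_div_add_mul_log (a b : ℝ) {c x : ℝ} (hc : c ≠ 0) (hx : x ≠ 0) :
    HasDerivAt (fun y => a / y + b * Real.log (c * y)) (-a / x ^ 2 + b / x) x := by
  have hdiv : HasDerivAt (fun y => a / y) (-a / x ^ 2) x := by
    simpa [div_eq_mul_inv] using (hasDerivAt_inv hx).const_mul a
  exact hdiv.add ((hasDerivAt_log_const_mul hc hx).const_mul b)

theorem reconstruction_linear_iff {Λ β T h' : ℝ} (hT : T ≠ 0) :
    T * β - β * T / 2 + 3 * T ^ 2 * h' = Λ ↔ h' = Λ / (3 * T ^ 2) - β / (6 * T) := by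
  field_simp
  constructor <;> intro h <;> linarith

theorem stmt_4_general {Λ α s T : ℝ} (hT : 0 < -T / s) {g h : ℝ → ℝ}
    (hg : g = fun T => (α - 1) * T)
    (hh : h = fun T => -(1 / 3) * (Λ / T + ((α - 1) / 2) * Real.log (-T / s))) :
    T * deriv g T - g T / 2 + 3 * T ^ 2 * deriv h T = Λ := by
  have hs : s ≠ 0 := by rintro rfl; simp at hT
  have hT₀ : T ≠ 0 := by rintro rfl; simp at hT
  have deriv_g : deriv g T = α - 1 := by
    rw [hg]
    exact (hasDerivAt_const_mul (α - 1)).deriv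
  have deriv_h : deriv h T = Λ / (3 * T ^ 2) - (α - 1) / (6 * T) := by
    have log_arg (y : ℝ) : -y / s = -s⁻¹ * y := by ring
    simp only [hh, log_arg]
    rw [((hasDerivAt_const_div_add_mul_log Λ ((α - 1) / 2)
      (neg_ne_zero.mpr (inv_ne_zero hs)) hT₀).const_mul (-(1 / 3))).deriv]
    ring
  rw [deriv_g, congrFun hg T]
  exact (reconstruction_linear_iff hT₀).mpr deriv_h

/-- The family g(T) = (α−1)T, h(T) = −(1/3)(Λ/T + ((α−1)/2)log(−T/Λ)) solves the
f(𝕋,B) reconstruction equation T·g'(T) − g(T)/2 + 3T²h'(T) = Λ for all T < 0. -/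
theorem stmt_4 (Λ α : ℝ) (hΛ : 0 < Λ)
    (g h : ℝ → ℝ)
    (hg : g = fun T => (α - 1) * T)
    (hh : h = fun T => -(1 / 3) * (Λ / T + ((α - 1) / 2) * Real.log (-T / Λ))) :
    ∀ T < 0, T * deriv g T - g T / 2 + 3 * T ^ 2 * deriv h T = Λ :=
  fun _ hT => stmt_4_general (div_pos (neg_pos.mpr hT) hΛ) hg hh
end

section
/- Let k > 0, M > 0, R > 0. Suppose A, B : (R,∞) → ℝ are differentiable, B(r) + r·B'(r) = 0 for all r > R, B(r) → k·M/(3π·R) as r → R⁺, 4·r·c'(r) = B(r) + r·A'(r) for all r > R where c(r) = k·M/(12π·r), and A(r) → 0 as r → ∞. Then for all r > R, B(r) = k·M/(3π·r) and A(r) = 2·k·M/(3π·r); in particular A(r) = 2·B(r), so the Eddington parameter γ = B(r)·r / (A(r)·r) equals 1/2. -/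
open Filter

/-!
The equation for `B` says that `r * B r` is conserved, and the boundary value fixes the constant as
`b = k * M / (3 * π)`. Since `c r = b / (4 * r)`, the other equation becomes
`A' r = -2 * b / r ^ 2`, whose only solution vanishing at infinity is `2 * b / r`; the factor `2` is
`1 / γ`.
-/

section

open Set Topology

section RCLike

variable {𝕜 E : Type*} [RCLike 𝕜] [NormedAddCommGroup E] [NormedSpace 𝕜 E]
  {s : Set 𝕜} {l : Filter 𝕜} [l.NeBot]

theorem eqOn_of_deriv_eq_of_tendsto_sub {f g : 𝕜 → E} (hs : IsOpen s) (hs' : IsPreconnected s)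
    (hf : DifferentiableOn 𝕜 f s) (hg : DifferentiableOn 𝕜 g s)
    (hderiv : s.EqOn (deriv f) (deriv g)) (hl : ∀ᶠ x in l, x ∈ s)
    (hlim : Tendsto (fun x => f x - g x) l (𝓝 0)) : s.EqOn f g := by
  obtain ⟨a, ha⟩ := hs.exists_eq_add_of_deriv_eq hs' hf hg hderiv
  have hconst : Tendsto (fun x => f x - g x) l (𝓝 a) :=
    tendsto_const_nhds.congr' (hl.mono fun x hx => by simp [ha hx])
  simpa [tendsto_nhds_unique hconst hlim] using ha

theorem smul_eqOn_const_of_add_smul_deriv_eq_zero {f : 𝕜 → E} {c : E}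
    (hs : IsOpen s) (hs' : IsPreconnected s) (hf : ∀ x ∈ s, DifferentiableAt 𝕜 f x)
    (hode : ∀ x ∈ s, f x + x • deriv f x = 0) (hl : ∀ᶠ x in l, x ∈ s)
    (hlim : Tendsto (fun x => x • f x) l (𝓝 c)) : s.EqOn (fun x => x • f x) fun _ => c := by
  have hderiv (x : 𝕜) (hx : x ∈ s) : HasDerivAt (fun y => y • f y) 0 x := by
    have hprod := (hasDerivAt_id' x).fun_smul (hf x hx).hasDerivAt
    rwa [one_smul, add_comm, hode x hx] at hprod
  refine eqOn_of_deriv_eq_of_tendsto_sub hs hs'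
    (fun x hx => (hderiv x hx).differentiableAt.differentiableWithinAt)
    (differentiableOn_const c) (fun x hx => ?_) hl (by simpa using hlim.sub_const c)
  rw [(hderiv x hx).deriv, deriv_const]

end RCLike

variable {R : ℝ} {f : ℝ → ℝ}

theorem eq_div_of_add_mul_deriv_eq_zero {b : ℝ} (hR : 0 < R)
    (hf : ∀ r > R, DifferentiableAt ℝ f r) (hode : ∀ r > R, f r + r * deriv f r = 0)
    (hlim : Tendsto f (𝓝[>] R) (𝓝 (b / R))) {r : ℝ} (hr : R < r) : f r = b / r := by
  have hmul : Tendsto (fun x => x • f x) (𝓝[>] R) (𝓝 b) := by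
    have hid : Tendsto id (𝓝[>] R) (𝓝 R) := tendsto_id.mono_left nhdsWithin_le_nhds
    simpa [mul_div_cancel₀ b hR.ne'] using hid.mul hlim
  have hconst : r * f r = b :=
    smul_eqOn_const_of_add_smul_deriv_eq_zero (l := 𝓝[>] R) isOpen_Ioi isPreconnected_Ioi hf hode
      self_mem_nhdsWithin hmul hr
  rw [eq_div_iff (hR.trans hr).ne', mul_comm, hconst]

theorem eq_add_div_of_deriv_eq_neg_div_sq {a L : ℝ} (hR : 0 ≤ R)
    (hf : ∀ r > R, DifferentiableAt ℝ f r) (hderiv : ∀ r > R, deriv f r = -a / r ^ 2)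
    (hlim : Tendsto f atTop (𝓝 L)) {r : ℝ} (hr : R < r) : f r = L + a / r := by
  have hg (x : ℝ) (hx : R < x) : DifferentiableAt ℝ (fun y => L + a / y) x := by
    fun_prop (disch := exact (hR.trans_lt hx).ne')
  have hglim : Tendsto (fun x => L + a / x) atTop (𝓝 L) := by
    simpa using (tendsto_id.const_div_atTop a).const_add L
  exact eqOn_of_deriv_eq_of_tendsto_sub isOpen_Ioi isPreconnected_Ioi
    (fun x hx => (hf x hx).differentiableWithinAt)
    (fun x hx => (hg x hx).differentiableWithinAt)
    (fun x hx => by simp [hderiv x hx])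
    (eventually_gt_atTop R) (by simpa using hlim.sub hglim) hr

end

/-- Matched exterior solution of the linearized f(𝕋,B) = 𝕋 − H²B/𝕋 field equations:
B(r) = kM/(3πr), A(r) = 2kM/(3πr), hence Eddington parameter γ = 1/2. -/
theorem stmt_12 (k M R : ℝ) (hk : 0 < k) (hM : 0 < M) (hR : 0 < R)
    (A B : ℝ → ℝ)
    (hA : ∀ r > R, DifferentiableAt ℝ A r)
    (hB : ∀ r > R, DifferentiableAt ℝ B r)
    (hBode : ∀ r > R, B r + r * deriv B r = 0)
    (hBmatch : Tendsto B (nhdsWithin R (Set.Ioi R)) (nhds (k * M / (3 * Real.pi * R))))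
    (hrel : ∀ r > R,
      4 * r * deriv (fun s => k * M / (12 * Real.pi * s)) r = B r + r * deriv A r)
    (hAlim : Tendsto A atTop (nhds 0)) :
    ∀ r > R, B r = k * M / (3 * Real.pi * r) ∧ A r = 2 * k * M / (3 * Real.pi * r) ∧
      A r = 2 * B r ∧ (B r * r) / (A r * r) = 1 / 2 := by
  simp only [← div_div _ (3 * Real.pi), ← div_div _ (12 * Real.pi)] at hBmatch hrel ⊢
  have hBsol (r : ℝ) (hr : R < r) : B r = k * M / (3 * Real.pi) / r :=
    eq_div_of_add_mul_deriv_eq_zero hR hB hBode hBmatch hr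
  have hAderiv (r : ℝ) (hr : R < r) : deriv A r = -(2 * k * M / (3 * Real.pi)) / r ^ 2 := by
    have hr0 : r ≠ 0 := (hR.trans hr).ne'
    have hode := hrel r hr
    rw [deriv_const_div_id, hBsol r hr, ← sub_eq_iff_eq_add'] at hode
    rw [← mul_right_inj' hr0, ← hode]
    field
  intro r hr
  have hr0 : 0 < r := hR.trans hr
  have hAsol : A r = 2 * k * M / (3 * Real.pi) / r := by
    simpa using eq_add_div_of_deriv_eq_neg_div_sq hR.le hA hAderiv hAlim hr
  have hAB : A r = 2 * B r := by rw [hAsol, hBsol r hr]; ring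
  have hBpos : 0 < B r := by rw [hBsol r hr]; positivity
  exact ⟨hBsol r hr, hAsol, hAB, by rw [hAB]; field⟩
end

section
/- Fix r > 0 and for 0 < H < 1/r define g_rr(H) = 1/(1 − H²r²), g_tt(H,s) = −(1 − H²s²) (as a function of the radius s), and 𝕋⁻(H) = (1 − √(g_rr(H)))·(2/(r²·g_rr(H)))·( r·(∂_s g_tt)(H,r)/g_tt(H,r) + 1 − √(g_rr(H)) ). Then lim_{H→0⁺} 𝕋⁻(H)/H⁴ = (5/2)·r². -/
open Filter

/-!
Write `w = √(1 - H²r²)`. A static metric with `g_tt = -f` and `g_rr = 1 / f` has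
`𝕋⁻ = (2 / r²) (1 - √f) (1 - √f - r f' / √f)`. For `f = 1 - H²r²` the relation `H²r² = 1 - w²` makes
the last factor a multiple of `1 - w` as well, and `1 - w = H²r² / (1 + w)`. The resulting square of
`1 - w` is the origin of `H⁴`, and what remains tends to `5 / 2 * r²` as `w → 1`.
-/

/-- The torsion scalar `𝕋⁻` of the connection `Γ⁻` at radius `r`, for the static diagonal metric
`ds² = g_tt dt² + g_rr dr² + r² dΩ²` whose coefficients are functions of the radius. -/
noncomputable def torsionScalarMinus (gtt grr : ℝ → ℝ) (r : ℝ) : ℝ :=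
  (1 - √(grr r)) * (2 / (r ^ 2 * grr r)) * (r * deriv gtt r / gtt r + 1 - √(grr r))

theorem torsionScalarMinus_neg_one_div {f : ℝ → ℝ} {r : ℝ} (hf : 0 < f r) :
    torsionScalarMinus (fun s => -f s) (fun s => 1 / f s) r =
      2 / r ^ 2 * (1 - √(f r)) * (1 - √(f r) - r * deriv f r / √(f r)) := by
  have hw : √(f r) ≠ 0 := (Real.sqrt_pos.2 hf).ne'
  have hw_sq : f r = √(f r) ^ 2 := (Real.sq_sqrt hf.le).symm
  simp only [torsionScalarMinus, deriv.fun_neg, one_div, Real.sqrt_inv]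
  generalize √(f r) = w at *
  rw [hw_sq]
  field_simp
  ring

theorem deriv_one_sub_sq_mul_sq (H r : ℝ) :
    deriv (fun s => 1 - H ^ 2 * s ^ 2) r = -(2 * H ^ 2 * r) := by
  simp only [deriv_const_sub, deriv_const_mul_field', deriv_pow_field]
  ring

theorem one_sub_sqrt_one_sub {x : ℝ} (hx : x ≤ 1) : 1 - √(1 - x) = x / (1 + √(1 - x)) := by
  rw [eq_div_iff (by positivity)]
  linear_combination -Real.sq_sqrt (sub_nonneg.2 hx)

theorem torsionScalarMinus_deSitter {H r : ℝ} (hr : r ≠ 0) (hf : 0 < 1 - H ^ 2 * r ^ 2) :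
    torsionScalarMinus (fun s => -(1 - H ^ 2 * s ^ 2)) (fun s => 1 / (1 - H ^ 2 * s ^ 2)) r =
      2 * r ^ 2 * (2 + 3 * √(1 - H ^ 2 * r ^ 2)) /
        (√(1 - H ^ 2 * r ^ 2) * (1 + √(1 - H ^ 2 * r ^ 2)) ^ 2) * H ^ 4 := by
  rw [torsionScalarMinus_neg_one_div (f := fun s => 1 - H ^ 2 * s ^ 2) hf, deriv_one_sub_sq_mul_sq]
  have hw : 0 < √(1 - H ^ 2 * r ^ 2) := Real.sqrt_pos.2 hf
  have hw_sq := Real.sq_sqrt hf.le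
  have one_sub_w := one_sub_sqrt_one_sub (sub_pos.1 hf).le
  generalize √(1 - H ^ 2 * r ^ 2) = w at *
  calc 2 / r ^ 2 * (1 - w) * (1 - w - r * -(2 * H ^ 2 * r) / w)
      = 2 / r ^ 2 * (1 - w) ^ 2 * ((2 + 3 * w) / w) := by
        field_simp
        linear_combination 2 * (1 - w) * hw_sq
    _ = 2 / r ^ 2 * (H ^ 2 * r ^ 2 / (1 + w)) ^ 2 * ((2 + 3 * w) / w) := by rw [one_sub_w]
    _ = 2 * r ^ 2 * (2 + 3 * w) / (w * (1 + w) ^ 2) * H ^ 4 := by field_simp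

theorem tendsto_torsionScalarMinus_deSitter_coeff (r : ℝ) :
    Tendsto (fun H : ℝ => 2 * r ^ 2 * (2 + 3 * √(1 - H ^ 2 * r ^ 2)) /
        (√(1 - H ^ 2 * r ^ 2) * (1 + √(1 - H ^ 2 * r ^ 2)) ^ 2))
      (nhds 0) (nhds (5 / 2 * r ^ 2)) := by
  have tendsto_w : Tendsto (fun H : ℝ => √(1 - H ^ 2 * r ^ 2)) (nhds 0) (nhds 1) :=
    Continuous.tendsto' (by fun_prop) _ _ (by simp)
  have continuousAt_coeff :
      ContinuousAt (fun w : ℝ => 2 * r ^ 2 * (2 + 3 * w) / (w * (1 + w) ^ 2)) 1 :=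
    ContinuousAt.div (by fun_prop) (by fun_prop) (by norm_num)
  have coeff_one : 2 * r ^ 2 * (2 + 3 * 1) / (1 * (1 + 1) ^ 2) = 5 / 2 * r ^ 2 := by ring
  exact coeff_one ▸ continuousAt_coeff.tendsto.comp tendsto_w

theorem eventually_one_sub_sq_mul_sq_pos (r : ℝ) :
    ∀ᶠ H : ℝ in nhds 0, 0 < 1 - H ^ 2 * r ^ 2 :=
  (Continuous.tendsto' (by fun_prop) 0 1 (by simp)).eventually_const_lt one_pos

/-- The torsion scalar 𝕋⁻ of the Γ⁻ connection on static de Sitter expands as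
𝕋⁻ = (5/2)H⁴r² + O(H⁶), i.e. 𝕋⁻/H⁴ → (5/2)r² as H → 0⁺. -/
theorem stmt_16 (r : ℝ) (hr : 0 < r) :
    Tendsto (fun H : ℝ =>
        ((1 - Real.sqrt (1 / (1 - H ^ 2 * r ^ 2)))
            * (2 / (r ^ 2 * (1 / (1 - H ^ 2 * r ^ 2))))
            * (r * deriv (fun s => -(1 - H ^ 2 * s ^ 2)) r / (-(1 - H ^ 2 * r ^ 2))
                + 1 - Real.sqrt (1 / (1 - H ^ 2 * r ^ 2)))) / H ^ 4)
      (nhdsWithin 0 (Set.Ioi 0)) (nhds ((5 / 2) * r ^ 2)) := by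
  change Tendsto (fun H : ℝ => torsionScalarMinus
    (fun s => -(1 - H ^ 2 * s ^ 2)) (fun s => 1 / (1 - H ^ 2 * s ^ 2)) r / H ^ 4) _ _
  refine ((tendsto_torsionScalarMinus_deSitter_coeff r).mono_left nhdsWithin_le_nhds).congr' ?_
  filter_upwards [nhdsWithin_le_nhds (eventually_one_sub_sq_mul_sq_pos r), self_mem_nhdsWithin]
    with H hf (hH : 0 < H)
  rw [torsionScalarMinus_deSitter hr.ne' hf, mul_div_cancel_right₀ _ (pow_ne_zero 4 hH.ne')]
end

section
/- Let k > 0, M > 0, R > 0 and f₀ ≠ 0. Suppose A, B : (R,∞) → ℝ are differentiable with: B(r) + r·B'(r) = 0 for all r > R; B(r) → k·M/(6π·f₀·R) as r → R⁺; B(r) + r·A'(r) + k·M/(6π·f₀·r) = 0 for all r > R; and A(r) → 0 as r → ∞. Then for all r > R, B(r) = k·M/(6π·f₀·r) and A(r) = k·M/(3π·f₀·r); in particular A(r) = 2·B(r), so the Eddington parameter γ equals 1/2. -/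
open Filter

/-!
Since `B + r B' = (r B)'`, the `tt` equation makes `r B` constant on the exterior region, and
matching at the surface fixes the constant `b = k M / (6 π f₀)`. The `rr` equation then becomes
`A' = -2 b / r²`, and asymptotic flatness selects `A = 2 b / r` among the antiderivatives.
-/

section ConnectedDomain

open Set Topology

variable {𝕜 : Type*} [RCLike 𝕜] {s : Set 𝕜} {l : Filter 𝕜} [l.NeBot]

theorem eqOn_const_of_deriv_eq_zero_of_tendsto {E : Type*} [NormedAddCommGroup E]
    [NormedSpace 𝕜 E] {f : 𝕜 → E} {c : E} (hs : IsOpen s) (hs' : IsPreconnected s)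
    (hf : DifferentiableOn 𝕜 f s) (hf' : s.EqOn (deriv f) 0)
    (hl : s ∈ l) (hlim : Tendsto f l (𝓝 c)) : s.EqOn f fun _ ↦ c := by
  obtain ⟨a, ha⟩ := hs.exists_is_const_of_deriv_eq_zero hs' hf hf'
  have hlim_a : Tendsto f l (𝓝 a) :=
    tendsto_const_nhds.congr' <| by filter_upwards [hl] with x hx using (ha x hx).symm
  intro x hx
  rw [ha x hx, tendsto_nhds_unique hlim_a hlim]

theorem eqOn_div_of_add_mul_deriv_eq_zero_of_tendsto {f : 𝕜 → 𝕜} {c : 𝕜}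
    (hs : IsOpen s) (hs' : IsPreconnected s) (hs₀ : 0 ∉ s) (hf : DifferentiableOn 𝕜 f s)
    (hode : ∀ x ∈ s, f x + x * deriv f x = 0)
    (hl : s ∈ l) (hlim : Tendsto (fun x ↦ x * f x) l (𝓝 c)) : s.EqOn f fun x ↦ c / x := by
  have hderiv : s.EqOn (deriv fun x ↦ x * f x) 0 := by
    intro x hx
    have hfx := (hf.differentiableAt (hs.mem_nhds hx)).hasDerivAt
    simpa only [one_mul, hode x hx, Pi.zero_apply] using ((hasDerivAt_id' x).fun_mul hfx).deriv
  have hconst := eqOn_const_of_deriv_eq_zero_of_tendsto hs hs' (differentiableOn_id.fun_mul hf)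
    hderiv hl hlim
  intro x hx
  exact eq_div_of_mul_eq (ne_of_mem_of_not_mem hx hs₀) ((mul_comm _ _).trans (hconst hx))

theorem eqOn_add_div_of_deriv_eq_neg_div_sq_of_tendsto {f : 𝕜 → 𝕜} {a c : 𝕜}
    (hs : IsOpen s) (hs' : IsPreconnected s) (hs₀ : 0 ∉ s) (hf : DifferentiableOn 𝕜 f s)
    (hf' : ∀ x ∈ s, deriv f x = -c / x ^ 2)
    (hl : s ∈ l) (hl' : l ≤ Bornology.cobounded 𝕜) (hlim : Tendsto f l (𝓝 a)) :
    s.EqOn f fun x ↦ a + c / x := by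
  have hg (x) (hx : x ∈ s) : HasDerivAt (fun y ↦ f y - c * y⁻¹) 0 x := by
    have hfx := (hf.differentiableAt (hs.mem_nhds hx)).hasDerivAt
    have hinv := (hasDerivAt_inv (ne_of_mem_of_not_mem hx hs₀)).const_mul c
    refine (hfx.fun_sub hinv).congr_deriv ?_
    rw [hf' x hx]
    ring
  have hg_lim : Tendsto (fun x ↦ f x - c * x⁻¹) l (𝓝 a) := by
    simpa using hlim.sub ((tendsto_inv₀_cobounded.mono_left hl').const_mul c)
  have hconst := eqOn_const_of_deriv_eq_zero_of_tendsto hs hs'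
    (fun x hx ↦ (hg x hx).differentiableAt.differentiableWithinAt)
    (fun x hx ↦ (hg x hx).deriv) hl hg_lim
  intro x hx
  simpa only [div_eq_mul_inv] using sub_eq_iff_eq_add.mp (hconst hx)

end ConnectedDomain

section Exterior

open Set Topology

variable {A B : ℝ → ℝ} {R b : ℝ}

theorem eqOn_div_of_tt_equation (hR : 0 < R) (hB : DifferentiableOn ℝ B (Ioi R))
    (htt : ∀ r > R, B r + r * deriv B r = 0) (hmatch : Tendsto B (𝓝[>] R) (𝓝 (b / R))) :
    (Ioi R).EqOn B fun r ↦ b / r := by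
  have hlim : Tendsto (fun r ↦ r * B r) (𝓝[>] R) (𝓝 b) := by
    simpa only [id_eq, mul_div_cancel₀ b hR.ne'] using
      (tendsto_nhdsWithin_of_tendsto_nhds tendsto_id).mul hmatch
  exact eqOn_div_of_add_mul_deriv_eq_zero_of_tendsto isOpen_Ioi isPreconnected_Ioi
    (notMem_Ioi.mpr hR.le) hB htt self_mem_nhdsWithin hlim

theorem eqOn_two_mul_div_of_rr_equation (hR : 0 ≤ R) (hA : DifferentiableOn ℝ A (Ioi R))
    (hB : (Ioi R).EqOn B fun r ↦ b / r)
    (hrr : ∀ r > R, B r + r * deriv A r + b / r = 0) (hflat : Tendsto A atTop (𝓝 0)) :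
    (Ioi R).EqOn A fun r ↦ 2 * b / r := by
  have hderiv : ∀ r ∈ Ioi R, deriv A r = -(2 * b) / r ^ 2 := by
    intro r hr
    have hr₀ : r ≠ 0 := (hR.trans_lt hr).ne'
    have hrr_r := hrr r hr
    rw [hB hr] at hrr_r
    field_simp at hrr_r ⊢
    linear_combination hrr_r
  simpa only [zero_add] using eqOn_add_div_of_deriv_eq_neg_div_sq_of_tendsto isOpen_Ioi
    isPreconnected_Ioi (notMem_Ioi.mpr hR) hA hderiv (Ioi_mem_atTop R)
    IsOrderBornology.atTop_le_cobounded hflat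

end Exterior

/-- Core of the γ = 1/2 theorem for general f(𝕋,B) / f(ℚ,C): the matched exterior
solution has B(r) = kM/(6πf₀r), A(r) = kM/(3πf₀r), hence A = 2B and γ = 1/2. -/
theorem stmt_18 (k M R f₀ : ℝ) (hk : 0 < k) (hM : 0 < M) (hR : 0 < R) (hf₀ : f₀ ≠ 0)
    (A B : ℝ → ℝ)
    (hA : ∀ r > R, DifferentiableAt ℝ A r)
    (hB : ∀ r > R, DifferentiableAt ℝ B r)
    (hBode : ∀ r > R, B r + r * deriv B r = 0)
    (hBmatch : Tendsto B (nhdsWithin R (Set.Ioi R))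
      (nhds (k * M / (6 * Real.pi * f₀ * R))))
    (hrel : ∀ r > R, B r + r * deriv A r + k * M / (6 * Real.pi * f₀ * r) = 0)
    (hAlim : Tendsto A atTop (nhds 0)) :
    ∀ r > R, B r = k * M / (6 * Real.pi * f₀ * r) ∧
      A r = k * M / (3 * Real.pi * f₀ * r) ∧
      A r = 2 * B r ∧ B r / A r = 1 / 2 := by
  simp only [← div_div _ _ R] at hBmatch
  simp only [← div_div (k * M) (6 * Real.pi * f₀)] at hrel
  have hB_eq := eqOn_div_of_tt_equation hR
    (fun r hr ↦ (hB r hr).differentiableWithinAt) hBode hBmatch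
  have hA_eq := eqOn_two_mul_div_of_rr_equation hR.le
    (fun r hr ↦ (hA r hr).differentiableWithinAt) hB_eq hrel hAlim
  intro r hr
  have hBr : B r = k * M / (6 * Real.pi * f₀ * r) := (hB_eq hr).trans (div_div _ _ _)
  have hAB : A r = 2 * B r := by
    simp only [hA_eq hr, hB_eq hr]
    ring
  have hr₀ : r ≠ 0 := (hR.trans hr).ne'
  have hB₀ : B r ≠ 0 := by rw [hBr]; positivity
  refine ⟨hBr, ?_, hAB, ?_⟩
  · rw [hAB, hBr]
    ring
  · rw [hAB]
    field_simp
end
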